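/- arXiv:2005.08300 — 2 statements merged into one kernel-verified Lean document; each statement's English description precedes it below -/
import Mathlib

section
/- Let f: F_2^m → F_2 be a Boolean function of algebraic degree d ≥ 1 and let n > m. Let S_d = {I ⊆ {1,…,m} : |I| = d, a_I ≠ 0} be the set of degree-d monomials in the ANF of f, and let I_min be the lexicographically minimal element of S_d. Then the ANF coefficient of the monomial I_min (viewed as a subset of {1,…,n}) in the ANF of the n-variable function f*(x_1,…,x_n) = ⊕_{i=1}^{n−m+1} f(x_i,…,x_{i+m−1}) is nonzero; in particular, for every shift l ∈ {2,…,n−m+1}, the shifted set I_min + l = {i + l−1 : i ∈ I_min} is distinct from I_min, so the monomial I_min is not cancelled by any monomial arising from the l-th summand. -/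
/-- The CA-based construction: given a local rule `f` of `m` variables and `n ≥ m`,
the `n`-variable function `f*` is the XOR of all output cells of the no-boundary CA. -/
def caStar (m n : ℕ) (h : m ≤ n) (f : (Fin m → ZMod 2) → ZMod 2) :
    (Fin n → ZMod 2) → ZMod 2 :=
  fun x => ∑ i : Fin (n - m + 1),
    f (fun j => x ⟨i.val + j.val, by have hi := i.isLt; have hj := j.isLt; omega⟩)

/-- The ANF coefficient `a_I` of a Boolean function, via the Möbius transform:
`a_I = ⊕_{x : supp(x) ⊆ I} f(x)`. -/
def anf {n : ℕ} (f : (Fin n → ZMod 2) → ZMod 2) (I : Finset (Fin n)) : ZMod 2 :=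
  ∑ x ∈ Finset.univ.filter (fun x : Fin n → ZMod 2 => ∀ i, x i = 1 → i ∈ I), f x

/-- The algebraic degree of a Boolean function: `max {|I| : a_I ≠ 0}` (0 for the zero function). -/
def algDegree {n : ℕ} (f : (Fin n → ZMod 2) → ZMod 2) : ℕ :=
  (Finset.univ.filter fun I : Finset (Fin n) => anf f I ≠ 0).sup Finset.card

/-- The Walsh transform `W_f(a) = Σ_x (-1)^(f(x) ⊕ a·x)`. -/
def walsh {n : ℕ} (f : (Fin n → ZMod 2) → ZMod 2) (a : Fin n → ZMod 2) : ℤ :=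
  ∑ x : Fin n → ZMod 2, (-1 : ℤ) ^ (f x + ∑ i, a i * x i).val

/-- The semi-bent value `λ`: `2^((n+1)/2)` for odd `n`, `2^((n+2)/2)` for even `n`. -/
def sbLambda (n : ℕ) : ℤ := if Odd n then 2 ^ ((n + 1) / 2) else 2 ^ ((n + 2) / 2)

/-- A Boolean function is semi-bent if its Walsh transform takes only the values `0, λ, -λ`. -/
def semiBent {n : ℕ} (f : (Fin n → ZMod 2) → ZMod 2) : Prop :=
  ∀ a, walsh f a = 0 ∨ walsh f a = sbLambda n ∨ walsh f a = -sbLambda n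

/-- A Boolean function is balanced if it takes the value 1 exactly `2^(n-1)` times. -/
def balanced {n : ℕ} (f : (Fin n → ZMod 2) → ZMod 2) : Prop :=
  (Finset.univ.filter fun x => f x = 1).card = 2 ^ (n - 1)

/-- `b` is a linear structure of `g` if the derivative `D_b g(x) = g(x) ⊕ g(x ⊕ b)` is constant. -/
def isLinearStructure {n : ℕ} (g : (Fin n → ZMod 2) → ZMod 2)
    (b : Fin n → ZMod 2) : Prop :=
  (∀ x, g x + g (x + b) = 0) ∨ (∀ x, g x + g (x + b) = 1)

/-- Lexicographic (strict) order on finite sets of indices, via their sorted lists. -/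
def lexLt {m : ℕ} (I J : Finset (Fin m)) : Prop :=
  List.Lex (· < ·) (I.sort (· ≤ ·)) (J.sort (· ≤ ·))

/-!
The coefficient of `I_min` in `f*` is the sum over the windows `i` of its coefficients in the
summands `f(x_i, …, x_{i+m-1})`. The first window contributes `a_{I_min}`. A later window
contributes `0` if it does not contain `I_min`, and otherwise `a_J` where `J` is `I_min` shifted
down. Then `min J < min I_min`, so `J` precedes `I_min` lexicographically, and `a_J = 0` by
minimality.
-/

theorem exists_mem_le_of_list_lex {α : Type*} [Preorder α] {l₁ l₂ : List α}
    (h : List.Lex (· < ·) l₁ l₂) (hne : l₁ ≠ []) (hsorted : l₂.Pairwise (· ≤ ·))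
    {a : α} (ha : a ∈ l₂) : ∃ b ∈ l₁, b ≤ a := by
  cases h with
  | nil => exact absurd rfl hne
  | cons => exact ⟨_, List.mem_cons_self, hsorted.rel_head ha⟩
  | rel hlt => exact ⟨_, List.mem_cons_self, hlt.le.trans (hsorted.rel_head ha)⟩

theorem exists_mem_le_of_lexLt {m : ℕ} {I J : Finset (Fin m)} (h : lexLt I J)
    (hI : I.Nonempty) {a : Fin m} (ha : a ∈ J) : ∃ b ∈ I, b ≤ a := by
  have hne : I.sort (· ≤ ·) ≠ [] := by
    simpa [← List.length_pos_iff] using hI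
  simpa only [Finset.mem_sort] using
    exists_mem_le_of_list_lex h hne (J.pairwise_sort (· ≤ ·)) ((Finset.mem_sort _).2 ha)

theorem exists_mem_forall_lt_of_image_subset_image {ι α : Type*} [LinearOrder α]
    {s t : Finset ι} {f g : ι → α} (hs : s.Nonempty) (hfg : ∀ i ∈ t, f i < g i)
    (hst : s.image f ⊆ t.image g) : ∃ a ∈ t, ∀ b ∈ s, f a < f b := by
  obtain ⟨b₀, hb₀, hb₀_min⟩ := s.exists_min_image f hs
  obtain ⟨a, ha, hab⟩ := Finset.mem_image.1 (hst (Finset.mem_image_of_mem f hb₀))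
  exact ⟨a, ha, fun b hb => (hfg a ha).trans_le (hab.trans_le (hb₀_min b hb))⟩

theorem image_ne_image_of_forall_lt {ι α : Type*} [LinearOrder α] {s : Finset ι} {f g : ι → α}
    (hs : s.Nonempty) (hfg : ∀ i ∈ s, f i < g i) : s.image g ≠ s.image f := by
  intro h
  obtain ⟨a, ha, hlt⟩ := exists_mem_forall_lt_of_image_subset_image hs hfg h.ge
  exact lt_irrefl _ (hlt a ha)

theorem anf_sum {ι : Type*} {n : ℕ} (s : Finset ι) (f : ι → (Fin n → ZMod 2) → ZMod 2)
    (I : Finset (Fin n)) : anf (fun x => ∑ i ∈ s, f i x) I = ∑ i ∈ s, anf (f i) I :=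
  Finset.sum_comm

section Substitution

variable {m n : ℕ} (f : (Fin m → ZMod 2) → ZMod 2)

theorem anf_comp_eq_zero_of_notMem_range {e : Fin m → Fin n} {K : Finset (Fin n)} {k : Fin n}
    (hk : k ∈ K) (hke : k ∉ Set.range e) : anf (fun x => f (x ∘ e)) K = 0 := by
  -- Flipping the variable `k` pairs off equal terms of the Möbius sum.
  refine Finset.sum_involution (fun x _ => Function.update x k (x k + 1)) ?_ ?_ ?_ ?_
  · intro x _
    rw [Function.update_comp_eq_of_notMem_range _ _ hke]
    exact CharTwo.add_self_eq_zero _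
  · intro x _ _ hfix
    simpa using congrFun hfix k
  · intro x hx
    simp only [Finset.mem_filter_univ] at hx ⊢
    intro i hi
    obtain rfl | hik := eq_or_ne i k
    · exact hk
    · exact hx i (by rwa [Function.update_of_ne hik] at hi)
  · intro x _
    simp [add_assoc, CharTwo.add_self_eq_zero]

theorem anf_comp_map (e : Fin m ↪ Fin n) (J : Finset (Fin m)) :
    anf (fun x => f (x ∘ e)) (J.map e) = anf f J := by
  refine Finset.sum_nbij' (· ∘ e) (Function.extend e · 0) ?_ ?_ ?_ ?_ fun _ _ => rfl
  · intro x hx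
    simp only [Finset.mem_filter_univ] at hx ⊢
    exact fun j hj => (Finset.mem_map' e).1 (hx _ hj)
  · intro y hy
    simp only [Finset.mem_filter_univ] at hy ⊢
    intro k hk
    by_cases hrange : ∃ j, e j = k
    · obtain ⟨j, rfl⟩ := hrange
      rw [e.injective.extend_apply] at hk
      exact Finset.mem_map_of_mem e (hy j hk)
    · simp [Function.extend_apply' _ _ _ hrange] at hk
  · intro x hx
    simp only [Finset.mem_filter_univ] at hx
    funext k
    by_cases hrange : ∃ j, e j = k
    · obtain ⟨j, rfl⟩ := hrange
      exact e.injective.extend_apply _ _ _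
    · rw [Function.extend_apply' _ _ _ hrange]
      by_contra hxk
      have hxk_one : x k = 1 := Fin.eq_one_of_ne_zero _ (Ne.symm hxk)
      exact hrange ((Finset.mem_map.1 (hx k hxk_one)).imp fun _ => And.right)
  · exact fun y _ => Function.extend_comp e.injective y 0

theorem exists_map_eq_of_anf_comp_ne_zero {e : Fin m ↪ Fin n} {K : Finset (Fin n)}
    (h : anf (fun x => f (x ∘ e)) K ≠ 0) :
    ∃ J : Finset (Fin m), J.map e = K ∧ anf f J ≠ 0 := by
  have hK : K ⊆ Finset.univ.map e := by
    intro k hk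
    by_contra hke
    exact h (anf_comp_eq_zero_of_notMem_range f hk (by simpa using hke))
  obtain ⟨J, -, rfl⟩ := Finset.subset_map_iff.1 hK
  exact ⟨J, rfl, by rwa [anf_comp_map] at h⟩

end Substitution

section Window

variable {m n : ℕ} (hmn : m ≤ n)

/-- The positions `i, …, i + m - 1` read by the `i`-th cell of the cellular automaton, with cells
and positions both numbered from `0`. -/
def windowEmb (i : Fin (n - m + 1)) : Fin m ↪ Fin n where
  toFun j := ⟨i + j, by omega⟩
  inj' j k h := by simpa [Fin.ext_iff] using h

theorem windowEmb_zero : windowEmb hmn 0 = Fin.castLEEmb hmn := by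
  ext j
  simp [windowEmb]

theorem castLE_lt_windowEmb {i : Fin (n - m + 1)} (hi : i ≠ 0) (j : Fin m) :
    Fin.castLE hmn j < windowEmb hmn i j := by
  have hi_pos : 0 < (i : ℕ) := Nat.pos_of_ne_zero (Fin.val_ne_zero_iff.2 hi)
  exact Fin.lt_def.2 (Nat.lt_add_of_pos_left hi_pos)

theorem anf_caStar (f : (Fin m → ZMod 2) → ZMod 2) (K : Finset (Fin n)) :
    anf (caStar m n hmn f) K = ∑ i, anf (fun x => f (x ∘ windowEmb hmn i)) K :=
  anf_sum Finset.univ (fun i x => f (x ∘ windowEmb hmn i)) K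

theorem exists_mem_forall_lt_of_map_windowEmb_eq {I J : Finset (Fin m)} (hI : I.Nonempty)
    {i : Fin (n - m + 1)} (hi : i ≠ 0)
    (h : J.map (windowEmb hmn i) = I.map (Fin.castLEEmb hmn)) : ∃ a ∈ J, ∀ b ∈ I, a < b := by
  rw [Finset.map_eq_image, Finset.map_eq_image] at h
  obtain ⟨a, ha, hlt⟩ := exists_mem_forall_lt_of_image_subset_image hI
    (fun j _ => castLE_lt_windowEmb hmn hi j) h.ge
  exact ⟨a, ha, hlt⟩

theorem anf_comp_windowEmb_eq_zero_of_lexMin {f : (Fin m → ZMod 2) → ZMod 2}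
    {I : Finset (Fin m)} (hI : I.Nonempty)
    (hmin : ∀ J : Finset (Fin m), J.card = I.card → anf f J ≠ 0 → J ≠ I → lexLt I J)
    {i : Fin (n - m + 1)} (hi : i ≠ 0) :
    anf (fun x => f (x ∘ windowEmb hmn i)) (I.map (Fin.castLEEmb hmn)) = 0 := by
  by_contra hne
  obtain ⟨J, hJI, hJ⟩ := exists_map_eq_of_anf_comp_ne_zero f hne
  obtain ⟨a, haJ, ha_lt⟩ := exists_mem_forall_lt_of_map_windowEmb_eq hmn hI hi hJI
  have hcard : J.card = I.card := by simpa using congrArg Finset.card hJI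
  have hJ_ne : J ≠ I := by
    rintro rfl
    exact lt_irrefl a (ha_lt a haJ)
  obtain ⟨b, hb, hba⟩ := exists_mem_le_of_lexLt (hmin J hcard hJ hJ_ne) hI haJ
  exact (ha_lt b hb).not_ge hba

end Window

theorem caStar_min_monomial_survives_general {m n : ℕ} (hmn : m ≤ n)
    (f : (Fin m → ZMod 2) → ZMod 2) {I : Finset (Fin m)} (hI : I.Nonempty)
    (hmin : ∀ J : Finset (Fin m), J.card = I.card → anf f J ≠ 0 → J ≠ I → lexLt I J) :
    anf (caStar m n hmn f) (I.map (Fin.castLEEmb hmn)) = anf f I ∧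
    ∀ l : ℕ, 2 ≤ l →
      (I.image fun i : Fin m => (i : ℕ) + l - 1) ≠ (I.image fun i : Fin m => (i : ℕ)) := by
  refine ⟨?_, fun l hl => image_ne_image_of_forall_lt hI fun i _ => by omega⟩
  calc anf (caStar m n hmn f) (I.map (Fin.castLEEmb hmn))
      = ∑ i, anf (fun x => f (x ∘ windowEmb hmn i)) (I.map (Fin.castLEEmb hmn)) :=
        anf_caStar hmn f _
    _ = anf (fun x => f (x ∘ windowEmb hmn 0)) (I.map (Fin.castLEEmb hmn)) :=
        Fintype.sum_eq_single 0 fun _ hi => anf_comp_windowEmb_eq_zero_of_lexMin hmn hI hmin hi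
    _ = anf f I := by rw [windowEmb_zero, anf_comp_map]

/-- the lexicographically minimal degree-`d` monomial `I_min` of `f`
survives in the ANF of `f*`, and every shifted copy of it is distinct from it. -/
theorem caStar_min_monomial_survives (m n d : ℕ) (hn : m < n)
    (f : (Fin m → ZMod 2) → ZMod 2)
    (hdeg : algDegree f = d) (hd : 1 ≤ d)
    (Imin : Finset (Fin m))
    (hcard : Imin.card = d) (hcoef : anf f Imin ≠ 0)
    (hmin : ∀ J : Finset (Fin m), J.card = d → anf f J ≠ 0 → J ≠ Imin → lexLt Imin J) :
    anf (caStar m n (le_of_lt hn) f) (Imin.map (Fin.castLEEmb (le_of_lt hn))) ≠ 0 ∧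
    ∀ l : ℕ, 2 ≤ l → l ≤ n - m + 1 →
      (Imin.image fun i : Fin m => (i : ℕ) + l - 1) ≠
        (Imin.image fun i : Fin m => (i : ℕ)) := by
  obtain ⟨hanf, hshift⟩ := caStar_min_monomial_survives_general hn.le f
    (Finset.card_pos.1 (by omega)) (hcard ▸ hmin)
  exact ⟨hanf.trans_ne hcoef, fun l hl _ => hshift l hl⟩
end

section
/- There are exactly 24 Boolean functions f: F_2^3 → F_2 of algebraic degree exactly 2 with zero constant term in their ANF such that f is semi-bent and the function f*: F_2^n → F_2 given by the CA-based construction is semi-bent for every n with 3 ≤ n ≤ 20; exactly 8 of these 24 functions additionally have the property that f* is balanced for every n with 3 ≤ n ≤ 20. -/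
/-!
Adding a linear function only translates the Walsh spectrum, so semi-bentness of `f*` depends on
the quadratic part of `f` alone. For the quadratic parts `x₀x₁`, `x₁x₂` and
`x₀x₁ + x₁x₂ + x₀x₂`, two suitable coordinates `t, s` split off a hyperbolic plane:
`f*` in `n + 2` variables equals `(t + α·v)(s + β·v) + f*(v)` with `f*(v)` in `n` variables. This
doubles the Walsh values up to sign, as `λ` does from `n` to `n + 2`, so the cases `n = 3, 4`
propagate to all `n`. The other four quadratic parts already fail at `n = 4`, which leaves `3 · 8`
functions. The rule `x₀x₁ + x₂ + ⋯` is right permutive and `x₁x₂ + x₀ + ⋯` is left permutive, so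
flipping the outermost cell flips `f*` and these `2 · 4` functions are always balanced; the
remaining sixteen all fail at `n = 6`.
-/

open Finset

section Sign

lemma neg_one_pow_val_add (s t : ZMod 2) :
    (-1 : ℤ) ^ (s + t).val = (-1) ^ s.val * (-1) ^ t.val := by
  revert s t; decide

lemma sum_neg_one_pow_val_mul (c d : ZMod 2) :
    ∑ t : ZMod 2, ∑ s : ZMod 2, (-1 : ℤ) ^ ((t + c) * (s + d)).val = 2 := by
  revert c d; decide

end Sign

section Walsh

variable {n : ℕ}

lemma walsh_add_dual (f : (Fin n → ZMod 2) → ZMod 2)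
    (ℓ : Module.Dual (ZMod 2) (Fin n → ZMod 2)) (a : Fin n → ZMod 2) :
    walsh (fun x => f x + ℓ x) a = walsh f ((dotProductEquiv (ZMod 2) (Fin n)).symm ℓ + a) := by
  obtain ⟨c, rfl⟩ := (dotProductEquiv (ZMod 2) (Fin n)).surjective ℓ
  simp [walsh, dotProduct, add_mul, sum_add_distrib, add_assoc]

lemma semiBent_add_dual_iff {f : (Fin n → ZMod 2) → ZMod 2}
    (ℓ : Module.Dual (ZMod 2) (Fin n → ZMod 2)) :
    semiBent (fun x => f x + ℓ x) ↔ semiBent f := by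
  simp only [semiBent, walsh_add_dual]
  exact (Equiv.addLeft ((dotProductEquiv (ZMod 2) (Fin n)).symm ℓ)).forall_congr_right
    (q := fun a => walsh f a = 0 ∨ walsh f a = sbLambda n ∨ walsh f a = -sbLambda n)

lemma sum_insertNth {α M : Type*} [Fintype α] [AddCommMonoid M] (i : Fin (n + 1))
    (F : (Fin (n + 1) → α) → M) :
    ∑ x, F x = ∑ t : α, ∑ v : Fin n → α, F (i.insertNth t v) := by
  rw [← (Fin.insertNthEquiv (fun _ => α) i).sum_comp F, Fintype.sum_prod_type]
  rfl

lemma insertNth_one_cons {α : Type*} (y t : α) (w : Fin n → α) :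
    (Fin.insertNth 1 t (Fin.cons y w : Fin (n + 1) → α) : Fin (n + 2) → α) =
      Fin.cons y (Fin.cons t w : Fin (n + 1) → α) := by
  rw [← Fin.succ_zero_eq_one, Fin.insertNth_succ_cons, Fin.insertNth_zero']

lemma walsh_eq_two_mul_walsh {F : (Fin (n + 2) → ZMod 2) → ZMod 2}
    {g : (Fin n → ZMod 2) → ZMod 2} {i : Fin (n + 2)} {j : Fin (n + 1)} {α β : Fin n → ZMod 2}
    (hF : ∀ t s v, F (i.insertNth t (j.insertNth s v)) = (t + α ⬝ᵥ v) * (s + β ⬝ᵥ v) + g v)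
    (a : Fin (n + 2) → ZMod 2) :
    walsh F a = 2 * (-1) ^ (a i * a (i.succAbove j)).val *
      walsh g (fun k => a (i.succAbove (j.succAbove k)) + a i * α k + a (i.succAbove j) * β k) := by
  set b := a i
  set c := a (i.succAbove j)
  set a' : Fin n → ZMod 2 := fun k => a (i.succAbove (j.succAbove k)) + b * α k + c * β k
    with ha'
  have dot_a' (v : Fin n → ZMod 2) :
      ∑ k, a' k * v k =
        ∑ k, a (i.succAbove (j.succAbove k)) * v k + b * (α ⬝ᵥ v) + c * (β ⬝ᵥ v) := by
    simp only [ha', add_mul, sum_add_distrib, dotProduct, mul_sum, mul_assoc]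
  have exponent (t s : ZMod 2) (v : Fin n → ZMod 2) :
      F (i.insertNth t (j.insertNth s v)) +
          ∑ k, a k * (i.insertNth t (j.insertNth s v) : Fin (n + 2) → ZMod 2) k =
        (t + (α ⬝ᵥ v + c)) * (s + (β ⬝ᵥ v + b)) + (b * c + (g v + ∑ k, a' k * v k)) := by
    rw [hF, Fin.sum_univ_succAbove _ i, Fin.sum_univ_succAbove _ j, dot_a']
    simp only [Fin.insertNth_apply_same, Fin.insertNth_apply_succAbove]
    linear_combination -(b * c + b * (α ⬝ᵥ v) + c * (β ⬝ᵥ v)) * CharTwo.two_eq_zero (R := ZMod 2)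
  calc walsh F a
      = ∑ t, ∑ s, ∑ v, (-1 : ℤ) ^ ((t + (α ⬝ᵥ v + c)) * (s + (β ⬝ᵥ v + b)) +
          (b * c + (g v + ∑ k, a' k * v k))).val := by
        simp only [walsh, sum_insertNth i, sum_insertNth j, exponent]
    _ = ∑ v, (∑ t, ∑ s, (-1 : ℤ) ^ ((t + (α ⬝ᵥ v + c)) * (s + (β ⬝ᵥ v + b))).val) *
          ((-1) ^ (b * c).val * (-1) ^ (g v + ∑ k, a' k * v k).val) := by
        simp only [neg_one_pow_val_add _ (b * c + _), neg_one_pow_val_add (b * c), sum_mul]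
        exact (sum_congr rfl fun t _ => sum_comm).trans sum_comm
    _ = 2 * (-1) ^ (b * c).val * walsh g a' := by
        simp only [sum_neg_one_pow_val_mul, walsh, mul_sum, mul_assoc]

lemma sbLambda_add_two (n : ℕ) : sbLambda (n + 2) = 2 * sbLambda n := by
  have odd_iff : Odd (n + 2) ↔ Odd n := by simp [Nat.odd_add]
  have half (k : ℕ) : (n + 2 + k) / 2 = (n + k) / 2 + 1 := by omega
  simp only [sbLambda, odd_iff, half, pow_succ']
  split_ifs <;> rfl

lemma semiBent_of_hyperbolic {F : (Fin (n + 2) → ZMod 2) → ZMod 2}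
    {g : (Fin n → ZMod 2) → ZMod 2} {i : Fin (n + 2)} {j : Fin (n + 1)} {α β : Fin n → ZMod 2}
    (hF : ∀ t s v, F (i.insertNth t (j.insertNth s v)) = (t + α ⬝ᵥ v) * (s + β ⬝ᵥ v) + g v)
    (hg : semiBent g) : semiBent F := by
  intro a
  rw [walsh_eq_two_mul_walsh hF, sbLambda_add_two]
  rcases neg_one_pow_eq_or ℤ (a i * a (i.succAbove j)).val with hsign | hsign <;>
    rcases hg _ with h | h | h <;> rw [hsign, h] <;> simp

end Walsh

section Balanced

lemma balanced_of_add_eq_add_one {n : ℕ} {f : (Fin n → ZMod 2) → ZMod 2} (b : Fin n → ZMod 2)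
    (hb : ∀ x, f (x + b) = f x + 1) : balanced f := by
  have card_eq : #{x | ¬ f x = 1} = #{x | f x = 1} := by
    refine card_equiv (Equiv.addRight b) fun x => ?_
    have flip : ∀ t : ZMod 2, ¬ t = 1 ↔ t + 1 = 1 := by decide
    simp [hb, flip]
  have card_add : #{x | f x = 1} + #{x | ¬ f x = 1} = 2 ^ n := by
    simp [card_filter_add_card_filter_not]
  rw [balanced]
  cases n with
  | zero => omega
  | succ n => rw [pow_succ] at card_add; simp only [Nat.add_sub_cancel]; omega

lemma balanced_caStar_of_cell_in_one_window {m n : ℕ} (h : m ≤ n)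
    {f : (Fin m → ZMod 2) → ZMod 2} (i : Fin (n - m + 1)) (j : Fin m)
    (hf : ∀ x, f (x + Pi.single j 1) = f x + 1)
    (hij : ∀ (i' : Fin (n - m + 1)) (j' : Fin m), i'.val + j'.val = i.val + j.val → i' = i) :
    balanced (caStar m n h f) := by
  refine balanced_of_add_eq_add_one (Pi.single ⟨i + j, by omega⟩ 1) fun x => ?_
  rw [caStar, caStar, ← add_sum_erase _ _ (mem_univ i), ← add_sum_erase _ _ (mem_univ i),
    add_right_comm, ← hf]
  congr 1
  · congr 1
    funext j'
    simp [Pi.single_apply, Fin.ext_iff]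
  · refine sum_congr rfl fun i' hi' => ?_
    congr 1
    funext j'
    have : i'.val + j'.val ≠ i.val + j.val := fun h => ne_of_mem_erase hi' (hij i' j' h)
    simp [Fin.ext_iff, this]

lemma balanced_caStar_of_leftPermutive {m n : ℕ} (h : m + 1 ≤ n)
    {f : (Fin (m + 1) → ZMod 2) → ZMod 2} (hf : ∀ x, f (x + Pi.single 0 1) = f x + 1) :
    balanced (caStar (m + 1) n h f) :=
  balanced_caStar_of_cell_in_one_window h 0 0 hf fun i' j' _ => by
    ext; simp_all

lemma balanced_caStar_of_rightPermutive {m n : ℕ} (h : m + 1 ≤ n)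
    {f : (Fin (m + 1) → ZMod 2) → ZMod 2}
    (hf : ∀ x, f (x + Pi.single (Fin.last m) 1) = f x + 1) :
    balanced (caStar (m + 1) n h f) :=
  balanced_caStar_of_cell_in_one_window h (Fin.last _) (Fin.last m) hf fun i' j' hsum => by
    ext; simp only [Fin.val_last] at hsum ⊢; omega

end Balanced

section AlgebraicNormalForm

lemma natCast_card_Icc_zmod_two {ι : Type*} [DecidableEq ι] (s t : Finset ι) :
    (#(Icc s t) : ZMod 2) = if s = t then 1 else 0 := by
  by_cases hst : s ⊆ t
  · rcases hst.eq_or_ssubset with rfl | hlt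
    · simp
    · have : #t - #s ≠ 0 := by have := card_lt_card hlt; omega
      rw [card_Icc_finset hst, if_neg hlt.ne, Nat.cast_pow,
        show ((2 : ℕ) : ZMod 2) = 0 from rfl, zero_pow this]
  · rw [Icc_eq_empty hst, if_neg fun h => hst h.subset, card_empty, Nat.cast_zero]

lemma eq_sum_anf_mul_prod {n : ℕ} (f : (Fin n → ZMod 2) → ZMod 2) (x : Fin n → ZMod 2) :
    f x = ∑ I, anf f I * ∏ i ∈ I, x i := by
  let supp (y : Fin n → ZMod 2) : Finset (Fin n) := {i | y i = 1}
  have supp_inj (y : Fin n → ZMod 2) : supp y = supp x ↔ y = x := by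
    have eq_of_iff : ∀ s t : ZMod 2, (s = 1 ↔ t = 1) → s = t := by decide
    refine ⟨fun h => funext fun i => eq_of_iff _ _ ?_, congrArg supp⟩
    simpa [supp] using Finset.ext_iff.1 h i
  have monomial (I : Finset (Fin n)) : ∏ i ∈ I, x i = if I ⊆ supp x then 1 else 0 := by
    have eq_ite : ∀ t : ZMod 2, t = if t = 1 then 1 else 0 := by decide
    rw [prod_congr rfl fun i _ => eq_ite (x i), prod_ite_zero]
    simp [supp, subset_iff]
  have anf_eq (I : Finset (Fin n)) : anf f I = ∑ y, if supp y ⊆ I then f y else 0 := by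
    simp [anf, sum_filter, supp, subset_iff]
  calc f x = ∑ y, f y * #(Icc (supp y) (supp x)) := by
        simp [natCast_card_Icc_zmod_two, supp_inj]
    _ = ∑ y, ∑ I, (if supp y ⊆ I then f y else 0) * (if I ⊆ supp x then 1 else 0) := by
        refine sum_congr rfl fun y _ => ?_
        simp only [mul_ite, mul_one, mul_zero, ← ite_and, ← sum_filter, sum_const, nsmul_eq_mul]
        rw [mul_comm]
        congr 3
        ext I
        simp [and_comm]
    _ = ∑ I, anf f I * ∏ i ∈ I, x i := by
        rw [sum_comm]
        simp only [anf_eq, monomial, sum_mul]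

end AlgebraicNormalForm

section QuadraticRule

/-- The three-variable Boolean function with zero constant term and degree at most two, with
coefficients `q 0, q 1, q 2` of `x₀x₁, x₁x₂, x₀x₂` and linear coefficients `l`. -/
def quadraticRule (q l : Fin 3 → ZMod 2) (x : Fin 3 → ZMod 2) : ZMod 2 :=
  q 0 * (x 0 * x 1) + q 1 * (x 1 * x 2) + q 2 * (x 0 * x 2) + l ⬝ᵥ x

/-- The quadratic parts `x₀x₁`, `x₁x₂` and `x₀x₁ + x₁x₂ + x₀x₂`, in the encoding of
`quadraticRule`, for which the CA-based construction is always semi-bent. -/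
def semiBentParts : Finset (Fin 3 → ZMod 2) := {![1, 0, 0], ![0, 1, 0], ![1, 1, 1]}

lemma anf_quadraticRule (q l : Fin 3 → ZMod 2) :
    anf (quadraticRule q l) ∅ = 0 ∧
    ![anf (quadraticRule q l) {0, 1}, anf (quadraticRule q l) {1, 2},
      anf (quadraticRule q l) {0, 2}] = q ∧ (fun i => anf (quadraticRule q l) {i}) = l := by
  revert q l; decide +kernel

lemma algDegree_quadraticRule_eq_two_iff (q l : Fin 3 → ZMod 2) :
    algDegree (quadraticRule q l) = 2 ↔ q ≠ 0 := by
  revert q l; decide +kernel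

lemma exists_quadraticRule_eq {f : (Fin 3 → ZMod 2) → ZMod 2} (hdeg : algDegree f ≤ 2)
    (hconst : anf f ∅ = 0) : ∃ q l, quadraticRule q l = f := by
  have hcubic : anf f univ = 0 := by
    by_contra hne
    have : #(univ : Finset (Fin 3)) ≤ algDegree f := le_sup (f := card) (by simp [hne])
    rw [card_univ, Fintype.card_fin] at this
    omega
  refine ⟨![anf f {0, 1}, anf f {1, 2}, anf f {0, 2}], fun i => anf f {i}, funext fun x => ?_⟩
  have subsets : (univ : Finset (Finset (Fin 3))) =
      {∅, {0}, {1}, {2}, {0, 1}, {1, 2}, {0, 2}, univ} := by decide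
  rw [eq_sum_anf_mul_prod f x, subsets]
  repeat rw [sum_insert (by decide)]
  simp only [quadraticRule, dotProduct, Fin.sum_univ_three, hcubic, hconst, sum_singleton,
    prod_singleton, prod_pair (show (0 : Fin 3) ≠ 1 by decide),
    prod_pair (show (1 : Fin 3) ≠ 2 by decide), prod_pair (show (0 : Fin 3) ≠ 2 by decide),
    Matrix.cons_val]
  ring

lemma uncurry_quadraticRule_injective : Function.Injective (Function.uncurry quadraticRule) :=
  Function.LeftInverse.injective (g := fun f =>
    (![anf f {0, 1}, anf f {1, 2}, anf f {0, 2}], fun i => anf f {i})) fun p =>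
    Prod.ext (anf_quadraticRule p.1 p.2).2.1 (anf_quadraticRule p.1 p.2).2.2

lemma natCard_subtype_eq_card_coefficients {P : ((Fin 3 → ZMod 2) → ZMod 2) → Prop}
    {Q : (Fin 3 → ZMod 2) → (Fin 3 → ZMod 2) → Prop} [∀ q, DecidablePred (Q q)]
    (hP : ∀ f, P f → algDegree f ≤ 2 ∧ anf f ∅ = 0)
    (hPQ : ∀ q l, P (quadraticRule q l) ↔ Q q l) :
    Nat.card {f // P f} = #{p : (Fin 3 → ZMod 2) × (Fin 3 → ZMod 2) | Q p.1 p.2} := by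
  have subset_range : {f | P f} ⊆ Set.range (Function.uncurry quadraticRule) := fun f hf => by
    obtain ⟨q, l, rfl⟩ := exists_quadraticRule_eq (hP f hf).1 (hP f hf).2
    exact ⟨(q, l), rfl⟩
  calc Nat.card {f // P f}
      = Nat.card (Function.uncurry quadraticRule ⁻¹' {f | P f}) :=
        (Nat.card_preimage_of_injective uncurry_quadraticRule_injective subset_range).symm
    _ = #{p : (Fin 3 → ZMod 2) × (Fin 3 → ZMod 2) | Q p.1 p.2} :=
        Nat.subtype_card _ fun p => by simp [← hPQ, Function.uncurry]

end QuadraticRule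

section CellularAutomaton

lemma exists_dual_eq_caStar {m n : ℕ} (h : m ≤ n) (ℓ : Module.Dual (ZMod 2) (Fin m → ZMod 2)) :
    ∃ L : Module.Dual (ZMod 2) (Fin n → ZMod 2), ∀ x, L x = caStar m n h ℓ x :=
  ⟨∑ i : Fin (n - m + 1), ℓ ∘ₗ LinearMap.funLeft (ZMod 2) (ZMod 2)
    fun j => ⟨i.val + j.val, by omega⟩, fun x => by
      rw [LinearMap.sum_apply]; rfl⟩

lemma semiBent_caStar_add_dual_iff {m n : ℕ} (h : m ≤ n) (f : (Fin m → ZMod 2) → ZMod 2)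
    (ℓ : Module.Dual (ZMod 2) (Fin m → ZMod 2)) :
    semiBent (caStar m n h fun x => f x + ℓ x) ↔ semiBent (caStar m n h f) := by
  obtain ⟨L, hL⟩ := exists_dual_eq_caStar h ℓ
  rw [← semiBent_add_dual_iff (f := caStar m n h f) L]
  refine iff_of_eq (congrArg semiBent (funext fun x => ?_))
  simp only [hL, caStar, sum_add_distrib]

lemma semiBent_caStar_quadraticRule_iff {n : ℕ} (h : 3 ≤ n) (q l : Fin 3 → ZMod 2) :
    semiBent (caStar 3 n h (quadraticRule q l)) ↔ semiBent (caStar 3 n h (quadraticRule q 0)) := by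
  rw [← semiBent_caStar_add_dual_iff h (quadraticRule q 0) (dotProductEquiv (ZMod 2) (Fin 3) l)]
  refine iff_of_eq (congrArg (fun f => semiBent (caStar 3 n h f)) (funext fun x => ?_))
  simp [quadraticRule]

lemma caStar_self {m : ℕ} (f : (Fin m → ZMod 2) → ZMod 2) : caStar m m le_rfl f = f := by
  funext x
  have : Subsingleton (Fin (m - m + 1)) := Fin.subsingleton_iff_le_one.2 (by omega)
  rw [caStar, Fintype.sum_subsingleton _ 0]
  simp

variable (f : (Fin 3 → ZMod 2) → ZMod 2) {k : ℕ}

lemma caStar_three_cons (y : ZMod 2) (x : Fin (k + 2) → ZMod 2) :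
    caStar 3 (k + 3) (by omega) f (Fin.cons y x) =
      f ![y, x 0, x 1] + ∑ i : Fin k, f (fun j => x ⟨i.val + j.val, by omega⟩) := by
  refine (Fin.sum_univ_succ (n := k) _).trans (congrArg₂ _ (congrArg f (funext fun j => ?_))
    (sum_congr rfl fun i _ => congrArg f (funext fun j => ?_)))
  · fin_cases j <;> rfl
  · have : (⟨i.succ + j, by rw [Fin.val_succ]; omega⟩ : Fin (k + 3)) =
        Fin.succ ⟨i + j, by omega⟩ := Fin.ext (Nat.add_right_comm _ _ _)
    exact congrArg (Fin.cons y x : Fin (k + 3) → ZMod 2) this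

lemma caStar_three_cons_succ (y : ZMod 2) (x : Fin (k + 3) → ZMod 2) :
    caStar 3 (k + 4) (by omega) f (Fin.cons y x) =
      f ![y, x 0, x 1] + caStar 3 (k + 3) (by omega) f x :=
  caStar_three_cons f y x

lemma caStar_three_cons_eq_sub_add (y z : ZMod 2) (x : Fin (k + 2) → ZMod 2) :
    caStar 3 (k + 3) (by omega) f (Fin.cons y x) =
      f ![y, x 0, x 1] - f ![z, x 0, x 1] + caStar 3 (k + 3) (by omega) f (Fin.cons z x) := by
  rw [caStar_three_cons, caStar_three_cons, ← add_assoc, sub_add_cancel]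

end CellularAutomaton

section SemiBentParts

lemma quadraticRule_zero_cons (q : Fin 3 → ZMod 2) (x y z : ZMod 2) :
    quadraticRule q 0 ![x, y, z] = q 0 * (x * y) + q 1 * (y * z) + q 2 * (x * z) := by
  simp [quadraticRule]

variable {k : ℕ}

lemma caStar_mul_zero_one (t s : ZMod 2) (v : Fin (k + 3) → ZMod 2) :
    caStar 3 (k + 5) (by omega) (quadraticRule ![1, 0, 0] 0)
        (Fin.cons t (Fin.cons s v : Fin (k + 4) → ZMod 2)) =
      (t + v 0) * s + caStar 3 (k + 3) (by omega) (quadraticRule ![1, 0, 0] 0) v := by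
  simp only [caStar_three_cons_succ, quadraticRule_zero_cons, Fin.cons_zero, Fin.cons_one,
    Matrix.cons_val]
  ring

lemma caStar_mul_one_two (t s y : ZMod 2) (w : Fin (k + 2) → ZMod 2) :
    caStar 3 (k + 5) (by omega) (quadraticRule ![0, 1, 0] 0)
        (Fin.cons y (Fin.cons t (Fin.cons s w : Fin (k + 3) → ZMod 2) : Fin (k + 4) → ZMod 2)) =
      (t + w 0) * s +
        caStar 3 (k + 3) (by omega) (quadraticRule ![0, 1, 0] 0) (Fin.cons y w) := by
  rw [caStar_three_cons_succ, caStar_three_cons_succ, caStar_three_cons_eq_sub_add _ s y]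
  simp only [quadraticRule_zero_cons, Fin.cons_zero, Fin.cons_one, Matrix.cons_val]
  ring

lemma caStar_all_pairs (t s y : ZMod 2) (w : Fin (k + 2) → ZMod 2) :
    caStar 3 (k + 5) (by omega) (quadraticRule ![1, 1, 1] 0)
        (Fin.cons t (Fin.cons y (Fin.cons s w : Fin (k + 3) → ZMod 2) : Fin (k + 4) → ZMod 2)) =
      (t + w 1) * (s + y) +
        caStar 3 (k + 3) (by omega) (quadraticRule ![1, 1, 1] 0) (Fin.cons y w) := by
  rw [caStar_three_cons_succ, caStar_three_cons_succ, caStar_three_cons_eq_sub_add _ s y]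
  simp only [quadraticRule_zero_cons, Fin.cons_zero, Fin.cons_one, Matrix.cons_val]
  linear_combination (y * s + s * w 0 - y * w 1) * CharTwo.two_eq_zero (R := ZMod 2)

lemma semiBent_caStar_add_two {q : Fin 3 → ZMod 2} (hq : q ∈ semiBentParts)
    (h : semiBent (caStar 3 (k + 3) (by omega) (quadraticRule q 0))) :
    semiBent (caStar 3 (k + 5) (by omega) (quadraticRule q 0)) := by
  simp only [semiBentParts, mem_insert, mem_singleton] at hq
  rcases hq with rfl | rfl | rfl
  · refine semiBent_of_hyperbolic (i := 0) (j := 0) (α := Pi.single 0 1) (β := 0)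
      (fun t s v => ?_) h
    simp [Fin.insertNth_zero', caStar_mul_zero_one]
  · refine semiBent_of_hyperbolic (i := 1) (j := 1) (α := Pi.single 1 1) (β := 0)
      (fun t s v => ?_) h
    obtain ⟨y, w, rfl⟩ : ∃ y w, v = Fin.cons y w := ⟨_, _, (Fin.cons_self_tail v).symm⟩
    simp [insertNth_one_cons, caStar_mul_one_two]
  · refine semiBent_of_hyperbolic (i := 0) (j := 1) (α := Pi.single 2 1) (β := Pi.single 0 1)
      (fun t s v => ?_) h
    obtain ⟨y, w, rfl⟩ : ∃ y w, v = Fin.cons y w := ⟨_, _, (Fin.cons_self_tail v).symm⟩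
    have cons_two : (Fin.cons y w : Fin (k + 3) → ZMod 2) 2 = w 1 := rfl
    simp [Fin.insertNth_zero', insertNth_one_cons, caStar_all_pairs, cons_two]

lemma semiBent_caStar_three_of_mem {q : Fin 3 → ZMod 2} (hq : q ∈ semiBentParts) :
    semiBent (caStar 3 3 le_rfl (quadraticRule q 0)) := by
  revert q; unfold semiBent; decide +kernel

lemma semiBent_caStar_four_iff {q : Fin 3 → ZMod 2} (hq : q ≠ 0) :
    semiBent (caStar 3 4 (by omega) (quadraticRule q 0)) ↔ q ∈ semiBentParts := by
  revert q; unfold semiBent; decide +kernel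

lemma ne_zero_of_mem_semiBentParts {q : Fin 3 → ZMod 2} (hq : q ∈ semiBentParts) : q ≠ 0 := by
  revert q; decide

lemma semiBent_caStar_of_mem {n : ℕ} (h : 3 ≤ n) {q : Fin 3 → ZMod 2} (hq : q ∈ semiBentParts)
    (l : Fin 3 → ZMod 2) : semiBent (caStar 3 n h (quadraticRule q l)) := by
  rw [semiBent_caStar_quadraticRule_iff]
  obtain ⟨k, rfl⟩ := Nat.exists_eq_add_of_le' h
  induction k using Nat.twoStepInduction with
  | zero => exact semiBent_caStar_three_of_mem hq
  | one => exact (semiBent_caStar_four_iff (ne_zero_of_mem_semiBentParts hq)).2 hq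
  | more k ih _ => exact semiBent_caStar_add_two hq (ih _)

lemma semiBent_conditions_iff (S : Set ℕ) (h₄ : 4 ∈ S) (q l : Fin 3 → ZMod 2) :
    (algDegree (quadraticRule q l) = 2 ∧ anf (quadraticRule q l) ∅ = 0 ∧
      semiBent (quadraticRule q l) ∧
      ∀ n (h : 3 ≤ n), n ∈ S → semiBent (caStar 3 n h (quadraticRule q l))) ↔
      q ∈ semiBentParts := by
  rw [algDegree_quadraticRule_eq_two_iff]
  constructor
  · rintro ⟨hq, -, -, hsemi⟩
    exact (semiBent_caStar_four_iff hq).1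
      ((semiBent_caStar_quadraticRule_iff _ q l).1 (hsemi 4 (by omega) h₄))
  · intro hq
    refine ⟨ne_zero_of_mem_semiBentParts hq, (anf_quadraticRule q l).1, ?_,
      fun n h _ => semiBent_caStar_of_mem h hq l⟩
    simpa only [caStar_self] using semiBent_caStar_of_mem le_rfl hq l

lemma eq_of_balanced_caStar_six {q l : Fin 3 → ZMod 2} (hq : q ∈ semiBentParts)
    (h : balanced (caStar 3 6 (by omega) (quadraticRule q l))) :
    q = ![1, 0, 0] ∧ l 2 = 1 ∨ q = ![0, 1, 0] ∧ l 0 = 1 := by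
  revert q l; unfold balanced; decide +kernel

lemma balanced_caStar_of_eq {n : ℕ} (h : 3 ≤ n) {q l : Fin 3 → ZMod 2}
    (hql : q = ![1, 0, 0] ∧ l 2 = 1 ∨ q = ![0, 1, 0] ∧ l 0 = 1) :
    balanced (caStar 3 n h (quadraticRule q l)) := by
  rcases hql with ⟨rfl, hl⟩ | ⟨rfl, hl⟩
  · refine balanced_caStar_of_rightPermutive h fun x => ?_
    have : (Fin.last 2) = 2 := rfl
    simp [quadraticRule, hl, this, add_assoc]
  · refine balanced_caStar_of_leftPermutive h fun x => ?_
    simp [quadraticRule, hl, add_assoc]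

lemma forall_balanced_caStar_iff (S : Set ℕ) (h₆ : 6 ∈ S) {q : Fin 3 → ZMod 2}
    (hq : q ∈ semiBentParts) (l : Fin 3 → ZMod 2) :
    (∀ n (h : 3 ≤ n), n ∈ S → balanced (caStar 3 n h (quadraticRule q l))) ↔
      q = ![1, 0, 0] ∧ l 2 = 1 ∨ q = ![0, 1, 0] ∧ l 0 = 1 :=
  ⟨fun hbal => eq_of_balanced_caStar_six hq (hbal _ _ h₆),
    fun hql _ h _ => balanced_caStar_of_eq h hql⟩

end SemiBentParts

theorem quadratic3_semibent_count_general (S : Set ℕ) (h₄ : 4 ∈ S) (h₆ : 6 ∈ S) :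
    Nat.card {f : (Fin 3 → ZMod 2) → ZMod 2 //
      algDegree f = 2 ∧ anf f ∅ = 0 ∧ semiBent f ∧
      ∀ n (h : 3 ≤ n), n ∈ S → semiBent (caStar 3 n h f)} = 24 ∧
    Nat.card {f : (Fin 3 → ZMod 2) → ZMod 2 //
      algDegree f = 2 ∧ anf f ∅ = 0 ∧ semiBent f ∧
      (∀ n (h : 3 ≤ n), n ∈ S → semiBent (caStar 3 n h f)) ∧
      (∀ n (h : 3 ≤ n), n ∈ S → balanced (caStar 3 n h f))} = 8 := by
  constructor
  · rw [natCard_subtype_eq_card_coefficients (fun f hf => ⟨hf.1.le, hf.2.1⟩)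
      (semiBent_conditions_iff S h₄)]
    decide +kernel
  · rw [natCard_subtype_eq_card_coefficients (fun f hf => ⟨hf.1.le, hf.2.1⟩)
      (Q := fun q l => q ∈ semiBentParts ∧ (q = ![1, 0, 0] ∧ l 2 = 1 ∨ q = ![0, 1, 0] ∧ l 0 = 1))
      fun q l => ?_]
    · decide +kernel
    · rw [← and_congr_right fun hq => forall_balanced_caStar_iff S h₆ hq l,
        ← semiBent_conditions_iff S h₄ q l]
      simp only [and_assoc]

/-- there are exactly 24 quadratic 3-variable functions (zero constant
term) that are semi-bent and yield semi-bent `f*` for all `3 ≤ n ≤ 20`; exactly 8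
of them moreover yield balanced `f*` for all `3 ≤ n ≤ 20`. -/
theorem quadratic3_semibent_count :
    Nat.card {f : (Fin 3 → ZMod 2) → ZMod 2 //
      algDegree f = 2 ∧ anf f ∅ = 0 ∧ semiBent f ∧
      ∀ n (h : 3 ≤ n), n ≤ 20 → semiBent (caStar 3 n h f)} = 24 ∧
    Nat.card {f : (Fin 3 → ZMod 2) → ZMod 2 //
      algDegree f = 2 ∧ anf f ∅ = 0 ∧ semiBent f ∧
      (∀ n (h : 3 ≤ n), n ≤ 20 → semiBent (caStar 3 n h f)) ∧
      (∀ n (h : 3 ≤ n), n ≤ 20 → balanced (caStar 3 n h f))} = 8 :=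
  quadratic3_semibent_count_general (Set.Iic 20) (by simp) (by simp)
end
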